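/- Let a, b be smooth compactly supported functions on ℝ³ = ℝ²_h × ℝ_v. Then ( ∫_ℝ ‖(ab)(·,x₃)‖²_{Ḣ^{1/2}(ℝ²)} dx₃ )^{1/2} ≤ C ‖a‖_{Ḣ^{1/2}(ℝ³)} ( ‖∇_h b‖_{L^∞_v L²_h} + ‖b‖_{L^∞(ℝ³)} ) for a universal constant C. -/

import Mathlib

open MeasureTheory Real
open scoped FourierTransform ENNReal

noncomputable section

/-- `ℝ^d` as a Euclidean space. -/
abbrev E (d : ℕ) := EuclideanSpace ℝ (Fin d)

/-- Homogeneous Sobolev norm `‖f‖_{Ḣ^s(ℝ^d)} = (∫ |ξ|^{2s} |𝓕f(ξ)|² dξ)^{1/2}`. -/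
noncomputable def hNorm (d : ℕ) (s : ℝ) (f : E d → ℂ) : ℝ :=
  (∫ ξ : E d, ‖ξ‖ ^ (2 * s) * ‖𝓕 f ξ‖ ^ 2) ^ (1/2 : ℝ)

/-- Embedding `ℝ² × ℝ → ℝ³`, `(x_h, x₃) ↦ (x₁,x₂,x₃)`. -/
noncomputable def emb (xh : E 2) (t : ℝ) : E 3 :=
  (EuclideanSpace.equiv (Fin 3) ℝ).symm ![xh 0, xh 1, t]

/-- Cauchy–Schwarz for `lintegral`, squared. -/
lemma cs_sq {α : Type*} [MeasurableSpace α] (μ : Measure α) {f g : α → ℝ≥0∞}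
    (hf : AEMeasurable f μ) (hg : AEMeasurable g μ) :
    (∫⁻ x, f x * g x ∂μ) ^ 2 ≤ (∫⁻ x, f x ^ 2 ∂μ) * (∫⁻ x, g x ^ 2 ∂μ) := by
  have h := ENNReal.lintegral_mul_le_Lp_mul_Lq μ Real.HolderConjugate.two_two hf hg
  have h2 : ∀ x : ℝ≥0∞, (x ^ (1 / 2 : ℝ)) ^ 2 = x := by
    intro x
    rw [← ENNReal.rpow_natCast, ← ENNReal.rpow_mul]; norm_num
  calc _ ≤ _ := pow_le_pow_left' h 2
    _ = _ := by
      rw [mul_pow, h2, h2]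
      simp only [ENNReal.rpow_two]

lemma kernel_bound : ∃ κ : ℝ≥0∞, κ ≠ ∞ ∧ ∀ R : ℝ, 0 ≤ R →
    ∫⁻ x : E 2, (if ‖x‖ ≤ R then (ENNReal.ofReal ‖x‖)⁻¹ else 0) ≤ κ * ENNReal.ofReal R := by
  refine ⟨ENNReal.ofReal (2 * volume.real (Metric.ball (0 : E 2) 1)), ENNReal.ofReal_ne_top, fun R hR => ?_⟩
  let f : ℝ → ℝ := Set.indicator (Set.Iic R) (fun y => y⁻¹)
  have key : ∀ y ∈ Set.Ioi (0:ℝ), y ^ (2 - 1) • f y = Set.indicator (Set.Iic R) (fun _ => (1:ℝ)) y := by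
    intro y hy
    have : y ≠ 0 := ne_of_gt hy
    simp only [f, Set.indicator]
    split_ifs <;> simp [this]
  have hinteg1 : IntegrableOn (Set.indicator (Set.Iic R) (fun _ => (1:ℝ))) (Set.Ioi 0) := by
    rw [integrableOn_indicator_iff measurableSet_Iic]
    have : Set.Iic R ∩ Set.Ioi 0 = Set.Ioc 0 R := by ext; simp [and_comm]
    rw [this]; simp
  have hinteg : Integrable (fun x : E 2 => f ‖x‖) := by
    rw [integrable_fun_norm_addHaar volume]
    simp only [finrank_euclideanSpace, Fintype.card_fin]
    exact (integrableOn_congr_fun key measurableSet_Ioi).2 hinteg1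
  have hval : ∫ x : E 2, f ‖x‖ = 2 * volume.real (Metric.ball (0 : E 2) 1) * R := by
    rw [integral_fun_norm_addHaar volume]
    simp only [finrank_euclideanSpace, Fintype.card_fin]
    rw [setIntegral_congr_fun measurableSet_Ioi key, setIntegral_indicator measurableSet_Iic]
    have : Set.Ioi 0 ∩ Set.Iic R = Set.Ioc 0 R := rfl
    rw [this]
    simp [hR]; ring
  have hf0 : ∀ x : E 2, 0 ≤ f ‖x‖ := fun x => Set.indicator_apply_nonneg (fun _ => by positivity)
  rw [← ENNReal.ofReal_mul (by positivity), ← hval,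
    ofReal_integral_eq_lintegral_ofReal hinteg (Filter.Eventually.of_forall hf0)]
  refine lintegral_mono_ae ?_
  have : ∀ᵐ x : E 2, x ≠ 0 := by simp [ae_iff]
  filter_upwards [this] with x hx
  simp only [f, Set.indicator, Set.mem_Iic]
  split_ifs with h
  · rw [ENNReal.ofReal_inv_of_pos (norm_pos_iff.2 hx)]
  · simp

lemma J_bound {κ : ℝ≥0∞} (hκ : ∀ R : ℝ, 0 ≤ R →
    ∫⁻ x : E 2, (if ‖x‖ ≤ R then (ENNReal.ofReal ‖x‖)⁻¹ else 0) ≤ κ * ENNReal.ofReal R)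
    {T f g : E 2 → ℝ≥0∞} (hT : Measurable T) (hf : Measurable f) (hg : Measurable g) :
    (∫⁻ p : E 2 × E 2, (if ‖p.1‖ ≤ ‖p.2‖ then T (p.1 + p.2) * f p.1 * g p.2 else 0)) ^ 2 ≤
      ((∫⁻ x, T x ^ 2) * ∫⁻ x, ENNReal.ofReal ‖x‖ * f x ^ 2) *
        (κ * ∫⁻ x, ENNReal.ofReal ‖x‖ * g x ^ 2) := by
  let w : E 2 → ℝ≥0∞ := fun x => (ENNReal.ofReal ‖x‖) ^ (1/2 : ℝ)
  let winv : E 2 → ℝ≥0∞ := fun x => ((ENNReal.ofReal ‖x‖)⁻¹) ^ (1/2 : ℝ)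
  have h2 : ∀ x : ℝ≥0∞, (x ^ (1 / 2 : ℝ)) ^ 2 = x := by
    intro x
    rw [← ENNReal.rpow_natCast, ← ENNReal.rpow_mul]; norm_num
  have hw : Measurable w := by fun_prop
  have hwinv : Measurable winv := by fun_prop
  have hS : MeasurableSet {p : E 2 × E 2 | ‖p.1‖ ≤ ‖p.2‖} :=
    measurableSet_le (by fun_prop) (by fun_prop)
  have hm1 : Measurable (fun p : E 2 × E 2 => T (p.1 + p.2) * (w p.1 * f p.1)) := by fun_prop
  have hm2 : Measurable (fun p : E 2 × E 2 => (if ‖p.1‖ ≤ ‖p.2‖ then winv p.1 else 0) * g p.2) := by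
    refine Measurable.mul (Measurable.ite hS (by fun_prop) (by fun_prop)) (by fun_prop)
  have hle : (∫⁻ p : E 2 × E 2, (if ‖p.1‖ ≤ ‖p.2‖ then T (p.1 + p.2) * f p.1 * g p.2 else 0)) ≤
      ∫⁻ p : E 2 × E 2, (T (p.1 + p.2) * (w p.1 * f p.1)) *
        ((if ‖p.1‖ ≤ ‖p.2‖ then winv p.1 else 0) * g p.2) := by
    refine lintegral_mono_ae ?_
    have h0 : ∀ᵐ x : E 2, x ≠ 0 := by simp [ae_iff]
    have : ∀ᵐ p : E 2 × E 2, p.1 ≠ 0 :=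
      Measure.quasiMeasurePreserving_fst.ae h0
    filter_upwards [this] with p hp
    split_ifs with h
    · have : w p.1 * winv p.1 = 1 := by
        simp only [w, winv]
        rw [← ENNReal.mul_rpow_of_nonneg _ _ (by norm_num), ENNReal.mul_inv_cancel]
        · simp
        · simpa using hp
        · simp
      calc _ = T (p.1 + p.2) * f p.1 * g p.2 * (w p.1 * winv p.1) := by rw [this, mul_one]
        _ ≤ _ := le_of_eq (by ring)
    · simp
  refine (pow_le_pow_left' hle 2).trans ((cs_sq _ hm1.aemeasurable hm2.aemeasurable).trans ?_)
  refine mul_le_mul' ?_ ?_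
  · rw [Measure.volume_eq_prod, lintegral_prod _ (hm1.pow_const 2).aemeasurable]
    simp only [mul_pow]
    have : ∀ x : E 2, ∫⁻ y : E 2, T (x + y) ^ 2 * (w x ^ 2 * f x ^ 2) =
        (∫⁻ y, T y ^ 2) * (ENNReal.ofReal ‖x‖ * f x ^ 2) := by
      intro x
      rw [lintegral_mul_const _ (by fun_prop), lintegral_add_left_eq_self (fun y => T y ^ 2) x, h2]
    simp_rw [this]
    rw [lintegral_const_mul _ (by fun_prop)]
  · rw [Measure.volume_eq_prod, lintegral_prod_symm _ (hm2.pow_const 2).aemeasurable]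
    simp only [mul_pow]
    rw [← lintegral_const_mul _ (by fun_prop)]
    refine lintegral_mono fun y => ?_
    have hm3 : Measurable (fun x : E 2 => (if ‖x‖ ≤ ‖y‖ then winv x else 0)) :=
      Measurable.ite (measurableSet_le (by fun_prop) (by fun_prop)) hwinv measurable_const
    rw [lintegral_mul_const _ (by fun_prop)]
    rw [← mul_assoc]
    gcongr
    refine le_trans (le_of_eq ?_) (hκ ‖y‖ (norm_nonneg _))
    refine lintegral_congr fun x => ?_
    split_ifs
    · rw [h2]
    · simp

lemma conv_bound : ∃ κ : ℝ≥0∞, κ ≠ ∞ ∧ ∀ f g : E 2 → ℝ≥0∞, Measurable f → Measurable g →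
    (∫⁻ ξ, (∫⁻ η, f (ξ - η) * g η) ^ 2 ≠ ∞) →
    ∫⁻ ξ, (∫⁻ η, f (ξ - η) * g η) ^ 2 ≤
      κ * ((∫⁻ x, ENNReal.ofReal ‖x‖ * f x ^ 2) * ∫⁻ x, ENNReal.ofReal ‖x‖ * g x ^ 2) := by
  obtain ⟨κ, hκt, hκ⟩ := kernel_bound
  refine ⟨4 * κ, by finiteness, fun f g hf hg hfin => ?_⟩
  set T : E 2 → ℝ≥0∞ := fun ξ => ∫⁻ η, f (ξ - η) * g η with hTdef
  have hT : Measurable T := by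
    apply Measurable.lintegral_prod_right' (f := fun p : E 2 × E 2 => f (p.1 - p.2) * g p.2)
    fun_prop
  set S := ∫⁻ ξ, T ξ ^ 2 with hS
  set A := ∫⁻ x, ENNReal.ofReal ‖x‖ * f x ^ 2
  set B := ∫⁻ x, ENNReal.ofReal ‖x‖ * g x ^ 2
  set J1 := ∫⁻ p : E 2 × E 2, (if ‖p.1‖ ≤ ‖p.2‖ then T (p.1 + p.2) * f p.1 * g p.2 else 0)
  set J2 := ∫⁻ p : E 2 × E 2, (if ‖p.1‖ ≤ ‖p.2‖ then T (p.1 + p.2) * g p.1 * f p.2 else 0)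
    with hJ2
  have b1 : J1 ^ 2 ≤ (S * A) * (κ * B) := J_bound hκ hT hf hg
  have b2 : J2 ^ 2 ≤ (S * B) * (κ * A) := J_bound hκ hT hg hf
  have hsplit : S ≤ J1 + J2 := by
    have e1 : S = ∫⁻ p : E 2 × E 2, T (p.1 + p.2) * f p.1 * g p.2 := by
      rw [Measure.volume_eq_prod, lintegral_prod_symm _ (by fun_prop)]
      have : ∀ y : E 2, ∫⁻ x, T (x + y) * f x * g y = ∫⁻ ξ, T ξ * (f (ξ - y) * g y) := by
        intro y
        rw [← lintegral_add_right_eq_self (fun ξ => T ξ * (f (ξ - y) * g y)) y]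
        simp [mul_assoc]
      simp_rw [this]
      rw [lintegral_lintegral_swap (by fun_prop)]
      refine lintegral_congr fun ξ => ?_
      rw [lintegral_const_mul _ (by fun_prop), sq]
    have e2 : J2 = ∫⁻ p : E 2 × E 2, (if ‖p.2‖ ≤ ‖p.1‖ then T (p.1 + p.2) * f p.1 * g p.2 else 0) := by
      rw [hJ2, Measure.volume_eq_prod, ← lintegral_prod_swap]
      refine lintegral_congr fun p => ?_
      simp only [Prod.fst_swap, Prod.snd_swap]
      rw [add_comm p.2 p.1]
      congr 1; ring
    have hS1 : MeasurableSet {p : E 2 × E 2 | ‖p.1‖ ≤ ‖p.2‖} :=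
      measurableSet_le (by fun_prop) (by fun_prop)
    rw [e1, e2, ← lintegral_add_left (Measurable.ite hS1 (by fun_prop) (by fun_prop))]
    refine lintegral_mono fun p => ?_
    rcases le_total ‖p.1‖ ‖p.2‖ with h | h <;> simp [h]
  have hsq : S * S ≤ S * (4 * κ * (A * B)) := by
    calc S * S = S ^ 2 := by ring
      _ ≤ (J1 + J2) ^ 2 := pow_le_pow_left' hsplit 2
      _ ≤ 2 * (J1 ^ 2 + J2 ^ 2) := by
        have := ENNReal.rpow_add_le_mul_rpow_add_rpow J1 J2 (p := 2) (by norm_num)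
        norm_num at this
        exact_mod_cast this
      _ ≤ 2 * ((S * A) * (κ * B) + (S * B) * (κ * A)) := by gcongr
      _ = _ := by ring
  by_cases h0 : S = 0
  · rw [h0]; exact zero_le
  · exact (ENNReal.mul_le_mul_iff_right h0 hfin).1 hsq

section plancherel
variable {V : Type*} [NormedAddCommGroup V] [InnerProductSpace ℝ V] [FiniteDimensional ℝ V]
  [MeasurableSpace V] [BorelSpace V]

open SchwartzMap in
/-- The `L²` Fourier transform agrees with the integral one on `L¹ ∩ L²`. -/
lemma fourier_toLp_ae {f : V → ℂ} (hf : Integrable f) (hf2 : MemLp f 2) :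
    ((𝓕 (hf2.toLp f) : Lp ℂ 2 (volume : Measure V)) : V → ℂ) =ᵐ[volume] 𝓕 f := by
  have hc : Continuous (𝓕 f) :=
    VectorFourier.fourierIntegral_continuous Real.continuous_fourierChar
      (by exact continuous_inner) hf
  refine ae_eq_of_integral_contDiff_smul_eq
    ((Lp.memLp _).locallyIntegrable (by norm_num)) hc.locallyIntegrable ?_
  intro g hg hgs
  let φ : 𝓢(V, ℂ) := HasCompactSupport.toSchwartzMap (f := fun x => (g x : ℂ))
    (hgs.comp_left (g := fun x : ℝ => (x : ℂ)) (by simp)) (Complex.ofRealCLM.contDiff.comp hg)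
  have hφ : ∀ x, φ x = (g x : ℂ) := fun x => rfl
  have h1 := congrArg (fun D => D φ) (Lp.fourier_toTemperedDistribution_eq (hf2.toLp f))
  simp only [TemperedDistribution.fourier_apply, Lp.toTemperedDistribution_apply] at h1
  have h2 := VectorFourier.integral_bilin_fourierIntegral_eq_flip (ContinuousLinearMap.mul ℂ ℂ)
    (L := innerₗ V) Real.continuous_fourierChar continuous_inner (μ := volume) (ν := volume)
    hf φ.integrable
  have e1 : ∫ x, g x • ((𝓕 (hf2.toLp f) : Lp ℂ 2 (volume : Measure V)) : V → ℂ) x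
      = ∫ x, φ x • ((𝓕 (hf2.toLp f) : Lp ℂ 2 (volume : Measure V)) : V → ℂ) x := by
    simp [hφ]
  rw [e1, ← h1]
  have e2 : ∫ x, g x • 𝓕 f x = ∫ x, 𝓕 f x * φ x := by
    simp [hφ, mul_comm]
  rw [e2]
  refine Eq.trans ?_ h2.symm
  refine integral_congr_ae ?_
  filter_upwards [hf2.coeFn_toLp] with x hx
  rw [hx]
  simp only [smul_eq_mul, ContinuousLinearMap.mul_apply', flip_innerₗ]
  rw [mul_comm]
  rfl

lemma lintegral_sq_eq_eLpNorm {f : V → ℂ} : ∫⁻ x, ‖f x‖ₑ ^ 2 = eLpNorm f 2 volume ^ 2 := by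
  rw [eLpNorm_eq_lintegral_rpow_enorm_toReal (by norm_num) (by norm_num)]
  rw [← ENNReal.rpow_natCast, ← ENNReal.rpow_mul]
  simp

lemma plancherel {f : V → ℂ} (hf : Integrable f) (hf2 : MemLp f 2) :
    ∫⁻ ξ, ‖𝓕 f ξ‖ₑ ^ 2 = ∫⁻ x, ‖f x‖ₑ ^ 2 := by
  rw [lintegral_sq_eq_eLpNorm, lintegral_sq_eq_eLpNorm]
  rw [← eLpNorm_congr_ae (fourier_toLp_ae hf hf2), ← Lp.enorm_def,
    ← eLpNorm_congr_ae hf2.coeFn_toLp, ← Lp.enorm_def]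
  congr 1
  rw [← ofReal_norm, ← ofReal_norm, Lp.norm_fourier_eq]

lemma memLp_two_of_bdd {f : V → ℂ} (hf : Integrable f) {C : ℝ} (hC : ∀ x, ‖f x‖ ≤ C) :
    MemLp f 2 := by
  rw [memLp_two_iff_integrable_sq_norm hf.1]
  have := hf.norm.bdd_mul (c := C) hf.1.norm (Filter.Eventually.of_forall (by simpa using hC))
  simpa [sq] using this

end plancherel

lemma conv_fin {f g : E 2 → ℝ≥0∞} (hf : Measurable f) (hg : Measurable g) {C : ℝ≥0∞}
    (hC : C ≠ ∞) (hfC : ∀ x, f x ≤ C) (hfi : ∫⁻ x, f x ≠ ∞) (hgi : ∫⁻ x, g x ≠ ∞) :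
    ∫⁻ ξ, (∫⁻ η, f (ξ - η) * g η) ^ 2 ≠ ∞ := by
  have h1 : ∀ ξ, (∫⁻ η, f (ξ - η) * g η) ≤ C * ∫⁻ x, g x := by
    intro ξ
    rw [← lintegral_const_mul _ hg]
    exact lintegral_mono fun η => by gcongr; exact hfC _
  have h2 : ∫⁻ ξ, (∫⁻ η, f (ξ - η) * g η) = (∫⁻ x, f x) * ∫⁻ x, g x := by
    rw [lintegral_lintegral_swap (by fun_prop)]
    rw [← lintegral_const_mul _ hg]
    refine lintegral_congr fun η => ?_
    rw [lintegral_mul_const _ (by fun_prop), lintegral_sub_right_eq_self f η]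
  have h3 : ∫⁻ ξ, (∫⁻ η, f (ξ - η) * g η) ^ 2 ≤
      (C * ∫⁻ x, g x) * ∫⁻ ξ, (∫⁻ η, f (ξ - η) * g η) := by
    have hT : Measurable (fun ξ => ∫⁻ η, f (ξ - η) * g η) := by
      apply Measurable.lintegral_prod_right' (f := fun p : E 2 × E 2 => f (p.1 - p.2) * g p.2)
      fun_prop
    rw [← lintegral_const_mul _ hT]
    refine lintegral_mono fun ξ => ?_
    rw [sq]
    gcongr
    exact h1 ξ
  refine ne_top_of_le_ne_top ?_ h3
  rw [h2]
  finiteness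

lemma sqrt_diff (x y : E 2) : |√‖x‖ - √‖x - y‖| ≤ √‖y‖ := by
  have h : ∀ a b c : ℝ, 0 ≤ b → 0 ≤ c → a ≤ b + c → √a ≤ √b + √c := by
    intro a b c hb hc h
    rw [Real.sqrt_le_left (by positivity)]
    nlinarith [Real.sq_sqrt hb, Real.sq_sqrt hc, Real.sqrt_nonneg b, Real.sqrt_nonneg c,
      mul_nonneg (Real.sqrt_nonneg b) (Real.sqrt_nonneg c)]
  have h1 := h ‖x‖ ‖x - y‖ ‖y‖ (norm_nonneg _) (norm_nonneg _) (by
    simpa using norm_add_le (x - y) y)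
  have h2 := h ‖x - y‖ ‖x‖ ‖y‖ (norm_nonneg _) (norm_nonneg _) (norm_sub_le x y)
  rw [abs_le]; constructor <;> linarith

open scoped Convolution in
open SchwartzMap ContinuousLinearMap in
lemma fourier_mul_eq_conv (u v : 𝓢(E 2, ℂ)) (ξ : E 2) :
    𝓕 (fun x => u x * v x) ξ = ∫ η, 𝓕 v η * 𝓕 u (ξ - η) := by
  have h := SchwartzMap.convolution_apply (mul ℂ ℂ) (𝓕 v) (𝓕 u) ξ
  have h1 : ((𝓕 v : 𝓢(E 2, ℂ)) ⋆[mul ℂ ℂ] (𝓕 u : 𝓢(E 2, ℂ))) ξ = ∫ η, 𝓕 v η * 𝓕 u (ξ - η) := rfl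
  rw [← h1, ← h]
  have hk : ∀ (w : 𝓢(E 2, ℂ)) (x : E 2), 𝓕 (𝓕 w) x = w (-x) := by
    intro w x
    have e : 𝓕⁻ (𝓕 w) = w := FourierTransform.fourierInv_fourier_eq w
    conv_rhs => rw [← e]
    rw [SchwartzMap.fourierInv_coe, Real.fourierInv_eq_fourier_neg, neg_neg]
    rfl
  change _ = 𝓕⁻ (pairing (mul ℂ ℂ) (𝓕 (𝓕 v)) (𝓕 (𝓕 u))) ξ
  rw [SchwartzMap.fourierInv_coe, Real.fourierInv_eq_fourier_comp_neg]
  refine congrFun (congrArg (fun h : E 2 → ℂ => 𝓕 h) (funext fun x => ?_)) ξ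
  simp [pairing_apply_apply, hk, mul_comm]

open scoped Convolution in
open SchwartzMap ContinuousLinearMap in
lemma product2D : ∃ κ : ℝ≥0∞, κ ≠ ∞ ∧ ∀ (u v : 𝓢(E 2, ℂ)) (M : ℝ≥0∞), (∀ x, ‖v x‖ₑ ≤ M) →
    ∫⁻ ξ : E 2, ENNReal.ofReal ‖ξ‖ * ‖𝓕 (fun x => u x * v x) ξ‖ₑ ^ 2 ≤
      κ * (M ^ 2 + ∫⁻ ξ : E 2, ENNReal.ofReal ‖ξ‖ ^ 2 * ‖𝓕 v ξ‖ₑ ^ 2) *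
        ∫⁻ ξ : E 2, ENNReal.ofReal ‖ξ‖ * ‖𝓕 u ξ‖ₑ ^ 2 := by
  obtain ⟨κ, hκt, hκ⟩ := conv_bound
  refine ⟨2 + 2 * κ, by finiteness, fun u v M hM => ?_⟩
  set U : 𝓢(E 2, ℂ) := 𝓕 u with hU
  set W : 𝓢(E 2, ℂ) := 𝓕 v with hW
  -- the half derivative of `u` on the Fourier side
  have hsq : ∀ x : E 2, √‖x‖ ≤ 1 + ‖x‖ := by
    intro x
    rw [Real.sqrt_le_left (by positivity)]; nlinarith [norm_nonneg x]
  let m : E 2 → ℂ := fun x => (√‖x‖ : ℂ) * U x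
  have hmc : Continuous m := by
    have := U.continuous
    fun_prop
  have hnorm : ∀ (Z : 𝓢(E 2, ℂ)) (x : E 2), ‖(√‖x‖ : ℂ) * Z x‖ ≤ ‖Z x‖ + ‖x‖ ^ 1 * ‖Z x‖ := by
    intro Z x
    rw [norm_mul, Complex.norm_real, Real.norm_of_nonneg (Real.sqrt_nonneg _)]
    nlinarith [hsq x, norm_nonneg (Z x)]
  have hinteg : ∀ (Z : 𝓢(E 2, ℂ)), Integrable (fun x => (√‖x‖ : ℂ) * Z x) := by
    intro Z
    have hZ := Z.continuous
    refine Integrable.mono' (Z.integrable.norm.add (Z.integrable_pow_mul volume 1))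
      (Continuous.aestronglyMeasurable (by fun_prop)) (Filter.Eventually.of_forall (hnorm Z))
  have hmi : Integrable m := hinteg U
  obtain ⟨C0, -, hC0⟩ := U.decay 0 0
  obtain ⟨C1, -, hC1⟩ := U.decay 1 0
  obtain ⟨D0, -, hD0⟩ := W.decay 0 0
  simp only [pow_zero, one_mul, norm_iteratedFDeriv_zero] at hC0 hC1 hD0
  have hmb : ∀ x, ‖m x‖ ≤ C0 + C1 := fun x =>
    (hnorm U x).trans (add_le_add (hC0 x) (hC1 x))
  have hm2 : MemLp m 2 := memLp_two_of_bdd hmi hmb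
  let A : E 2 → ℂ := (W : E 2 → ℂ) ⋆[mul ℂ ℂ] m
  have hAdef : ∀ ξ, A ξ = ∫ η, W η * m (ξ - η) := fun ξ => rfl
  have hAi : Integrable A := W.integrable.integrable_convolution _ hmi
  have hA2 : MemLp A 2 := by
    refine memLp_two_of_bdd hAi (C := ∫ η, ‖W η‖ * (C0 + C1)) fun ξ => ?_
    rw [hAdef]
    refine norm_integral_le_of_norm_le (W.integrable.norm.mul_const _)
      (Filter.Eventually.of_forall fun η => ?_)
    rw [norm_mul]
    gcongr
    exact hmb _
  have hFW : ∀ x, 𝓕 (W : E 2 → ℂ) x = v (-x) := by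
    intro x
    have e : 𝓕⁻ (𝓕 v) = v := FourierTransform.fourierInv_fourier_eq v
    conv_rhs => rw [← e]
    rw [SchwartzMap.fourierInv_coe, Real.fourierInv_eq_fourier_neg, neg_neg]
  have hAbound : ∫⁻ ξ, ‖A ξ‖ₑ ^ 2 ≤ M ^ 2 * ∫⁻ ξ : E 2, ENNReal.ofReal ‖ξ‖ * ‖U ξ‖ₑ ^ 2 := by
    rw [← plancherel hAi hA2]
    have e1 : ∀ x, 𝓕 A x = v (-x) * 𝓕 m x := by
      intro x
      rw [Real.fourier_mul_convolution_eq W.integrable hmi, hFW]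
    have e2 : ∫⁻ ξ, ‖m ξ‖ₑ ^ 2 = ∫⁻ ξ : E 2, ENNReal.ofReal ‖ξ‖ * ‖U ξ‖ₑ ^ 2 := by
      refine lintegral_congr fun ξ => ?_
      simp only [m]
      rw [enorm_mul, mul_pow]
      congr 1
      rw [← ofReal_norm, Complex.norm_real, Real.norm_of_nonneg (Real.sqrt_nonneg _),
        ← ENNReal.ofReal_pow (Real.sqrt_nonneg _), Real.sq_sqrt (norm_nonneg _)]
    rw [← e2, ← plancherel hmi hm2]
    by_cases hMt : M = ∞
    · by_cases h0 : ∫⁻ ξ, ‖𝓕 m ξ‖ₑ ^ 2 = 0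
      · rw [h0, mul_zero]
        have hmeas : Measurable (fun ξ => ‖𝓕 m ξ‖ₑ ^ 2) := by
          have hc : Continuous (𝓕 m) :=
            VectorFourier.fourierIntegral_continuous Real.continuous_fourierChar
              (by exact continuous_inner) hmi
          fun_prop
        rw [lintegral_eq_zero_iff hmeas] at h0
        refine le_of_eq (lintegral_eq_zero_of_ae_eq_zero ?_)
        filter_upwards [h0] with x hx
        have : 𝓕 m x = 0 := by simpa using hx
        simp [e1, this]
      · rw [hMt]; simp [ENNReal.top_mul h0]
    · rw [← lintegral_const_mul' _ _ (by finiteness)]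
      refine lintegral_mono fun x => ?_
      rw [e1, enorm_mul, mul_pow]
      gcongr
      exact hM _
  -- the commutator part
  let f : E 2 → ℝ≥0∞ := fun x => ‖U x‖ₑ
  let g : E 2 → ℝ≥0∞ := fun x => ‖(√‖x‖ : ℂ) * W x‖ₑ
  have hUc := U.continuous
  have hWc := W.continuous
  have hf : Measurable f := by fun_prop
  have hg : Measurable g := by fun_prop
  let T : E 2 → ℝ≥0∞ := fun ξ => ∫⁻ η, f (ξ - η) * g η
  have hTfin : ∫⁻ ξ, T ξ ^ 2 ≠ ∞ := by
    refine conv_fin hf hg (C := ENNReal.ofReal C0) (by finiteness) (fun x => ?_)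
      U.integrable.2.ne (hinteg W).2.ne
    simp only [f]
    rw [← ofReal_norm]
    exact ENNReal.ofReal_le_ofReal (hC0 x)
  have hTb := hκ f g hf hg hTfin
  have eg : ∫⁻ x, ENNReal.ofReal ‖x‖ * g x ^ 2 =
      ∫⁻ ξ : E 2, ENNReal.ofReal ‖ξ‖ ^ 2 * ‖W ξ‖ₑ ^ 2 := by
    refine lintegral_congr fun ξ => ?_
    simp only [g]
    rw [enorm_mul, mul_pow, sq (ENNReal.ofReal _), mul_assoc]
    congr 2
    rw [← ofReal_norm, Complex.norm_real, Real.norm_of_nonneg (Real.sqrt_nonneg _),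
      ← ENNReal.ofReal_pow (Real.sqrt_nonneg _), Real.sq_sqrt (norm_nonneg _)]
  rw [eg] at hTb
  have hpt : ∀ ξ, ‖(√‖ξ‖ : ℂ) * 𝓕 (fun x => u x * v x) ξ‖ₑ ≤ ‖A ξ‖ₑ + T ξ := by
    intro ξ
    have i1 : Integrable (fun η => W η * U (ξ - η)) := by
      refine W.integrable.mul_bdd (c := C0) (Continuous.aestronglyMeasurable (by fun_prop))
        (Filter.Eventually.of_forall fun η => hC0 _)
    have i2 : Integrable (fun η => W η * m (ξ - η)) := by
      refine W.integrable.mul_bdd (c := C0 + C1) (Continuous.aestronglyMeasurable (by fun_prop))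
        (Filter.Eventually.of_forall fun η => hmb _)
    have e : (√‖ξ‖ : ℂ) * 𝓕 (fun x => u x * v x) ξ =
        A ξ + ∫ η, ((√‖ξ‖ - √‖ξ - η‖ : ℝ) : ℂ) * (W η * U (ξ - η)) := by
      rw [fourier_mul_eq_conv, hAdef, ← integral_const_mul]
      rw [← sub_eq_iff_eq_add', ← integral_sub]
      · refine integral_congr_ae (Filter.Eventually.of_forall fun η => ?_)
        simp only [m, hU, hW]
        push_cast
        ring
      · exact i1.const_mul _
      · exact i2
    rw [e]
    refine (enorm_add_le _ _).trans ?_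
    gcongr
    refine (enorm_integral_le_lintegral_enorm _).trans ?_
    refine lintegral_mono fun η => ?_
    simp only [f, g]
    rw [enorm_mul, enorm_mul, enorm_mul]
    have : ‖((√‖ξ‖ - √‖ξ - η‖ : ℝ) : ℂ)‖ₑ ≤ ‖(√‖η‖ : ℂ)‖ₑ := by
      rw [enorm_le_iff_norm_le, Complex.norm_real, Complex.norm_real, Real.norm_eq_abs,
        Real.norm_of_nonneg (Real.sqrt_nonneg _)]
      exact sqrt_diff ξ η
    calc _ ≤ ‖(√‖η‖ : ℂ)‖ₑ * (‖W η‖ₑ * ‖U (ξ - η)‖ₑ) := by gcongr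
      _ = _ := by ring
  have hAm : Measurable (fun ξ => ‖A ξ‖ₑ ^ 2) := by
    have hAc : Continuous A := by
      refine BddAbove.continuous_convolution_right_of_integrable _ ?_ W.integrable hmc
      exact ⟨C0 + C1, fun x ⟨y, hy⟩ => hy ▸ hmb y⟩
    fun_prop
  set X := ∫⁻ ξ : E 2, ENNReal.ofReal ‖ξ‖ * ‖U ξ‖ₑ ^ 2
  set Y := ∫⁻ ξ : E 2, ENNReal.ofReal ‖ξ‖ ^ 2 * ‖W ξ‖ₑ ^ 2
  calc _ ≤ ∫⁻ ξ, 2 * (‖A ξ‖ₑ ^ 2 + T ξ ^ 2) := by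
        refine lintegral_mono fun ξ => ?_
        have h1 : ENNReal.ofReal ‖ξ‖ * ‖𝓕 (fun x => u x * v x) ξ‖ₑ ^ 2 =
            ‖(√‖ξ‖ : ℂ) * 𝓕 (fun x => u x * v x) ξ‖ₑ ^ 2 := by
          rw [enorm_mul, mul_pow]
          congr 1
          rw [← ofReal_norm, Complex.norm_real, Real.norm_of_nonneg (Real.sqrt_nonneg _),
            ← ENNReal.ofReal_pow (Real.sqrt_nonneg _), Real.sq_sqrt (norm_nonneg _)]
        rw [h1]
        refine (pow_le_pow_left' (hpt ξ) 2).trans ?_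
        have := ENNReal.rpow_add_le_mul_rpow_add_rpow ‖A ξ‖ₑ (T ξ) (p := 2) (by norm_num)
        norm_num at this
        exact_mod_cast this
    _ = 2 * ((∫⁻ ξ, ‖A ξ‖ₑ ^ 2) + ∫⁻ ξ, T ξ ^ 2) := by
        rw [lintegral_const_mul' _ _ (by norm_num), lintegral_add_left hAm]
    _ ≤ 2 * (M ^ 2 * X + κ * (X * Y)) := by gcongr
    _ ≤ 2 * (M ^ 2 * X + κ * (X * Y)) + (2 * κ * M ^ 2 * X + 2 * Y * X) := le_self_add
    _ = _ := by ring

open SchwartzMap in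
lemma grad_bound (v : 𝓢(E 2, ℂ)) :
    ∫⁻ ξ : E 2, ENNReal.ofReal ‖ξ‖ ^ 2 * ‖𝓕 v ξ‖ₑ ^ 2 ≤
      ENNReal.ofReal (∫ x : E 2, (‖fderiv ℝ v x (EuclideanSpace.single 0 1)‖ ^ 2
        + ‖fderiv ℝ v x (EuclideanSpace.single 1 1)‖ ^ 2)) := by
  let d : Fin 2 → 𝓢(E 2, ℂ) := fun i =>
    SchwartzMap.evalCLM ℝ (E 2) ℂ (EuclideanSpace.single i 1) (fderivCLM ℝ (E 2) ℂ v)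
  have hd : ∀ i x, d i x = fderiv ℝ v x (EuclideanSpace.single i 1) := fun i x => rfl
  have hFd : ∀ i ξ, 𝓕 (d i) ξ = (2 * π * Complex.I) * ((ξ i : ℝ) : ℂ) * 𝓕 v ξ := by
    intro i ξ
    have h1 : 𝓕 (d i) = SchwartzMap.evalCLM ℝ (E 2) ℂ (EuclideanSpace.single i 1)
        (𝓕 (fderivCLM ℝ (E 2) ℂ v)) := fourier_evalCLM_eq ℝ _ _
    rw [h1]
    change (𝓕 (fderiv ℝ v)) ξ (EuclideanSpace.single i 1) = _
    rw [Real.fourier_fderiv v.integrable v.differentiable (fderivCLM ℝ (E 2) ℂ v).integrable]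
    have h2 : (innerSL ℝ ξ) (EuclideanSpace.single i (1:ℝ)) = ξ i := by
      rw [innerSL_apply_apply, EuclideanSpace.inner_single_right]; simp
    simp only [VectorFourier.fourierSMulRight_apply, neg_apply, h2]
    simp
    ring_nf
    rfl
  have hmem : ∀ i, MemLp (d i) 2 := fun i => (d i).memLp 2 volume
  have hpl : ∀ i, ∫⁻ ξ, ‖𝓕 (d i) ξ‖ₑ ^ 2 = ∫⁻ x, ‖d i x‖ₑ ^ 2 := fun i =>
    plancherel (d i).integrable (hmem i)
  have hi : ∀ i, Integrable (fun x => ‖d i x‖ ^ 2) := fun i =>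
    (memLp_two_iff_integrable_sq_norm (hmem i).1).1 (hmem i)
  have hsum : Integrable (fun x => ‖d 0 x‖ ^ 2 + ‖d 1 x‖ ^ 2) := (hi 0).add (hi 1)
  change _ ≤ ENNReal.ofReal (∫ x : E 2, (‖d 0 x‖ ^ 2 + ‖d 1 x‖ ^ 2))
  rw [ofReal_integral_eq_lintegral_ofReal hsum (Filter.Eventually.of_forall fun x => by positivity)]
  have hc := fun i => (d i).continuous
  have hc' := fun i => (𝓕 (d i)).continuous
  have e : ∫⁻ x, ENNReal.ofReal (‖d 0 x‖ ^ 2 + ‖d 1 x‖ ^ 2) =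
      ∫⁻ ξ, (‖𝓕 (d 0) ξ‖ₑ ^ 2 + ‖𝓕 (d 1) ξ‖ₑ ^ 2) := by
    rw [lintegral_add_left (by have := hc' 0; fun_prop), hpl, hpl,
      ← lintegral_add_left (by have := hc 0; fun_prop)]
    refine lintegral_congr fun x => ?_
    rw [ENNReal.ofReal_add (by positivity) (by positivity), ENNReal.ofReal_pow (norm_nonneg _),
      ENNReal.ofReal_pow (norm_nonneg _), ofReal_norm, ofReal_norm]
  rw [e]
  refine lintegral_mono fun ξ => ?_
  simp only [← ofReal_norm]
  rw [← ENNReal.ofReal_pow (norm_nonneg _), ← ENNReal.ofReal_pow (norm_nonneg _),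
    ← ENNReal.ofReal_pow (norm_nonneg _), ← ENNReal.ofReal_pow (norm_nonneg _),
    ← ENNReal.ofReal_mul (by positivity), ← ENNReal.ofReal_add (by positivity) (by positivity)]
  refine ENNReal.ofReal_le_ofReal ?_
  rw [hFd, hFd, EuclideanSpace.norm_sq_eq, Fin.sum_univ_two]
  simp only [norm_mul, mul_pow, Complex.norm_real, Complex.norm_I, Complex.norm_ofNat,
    mul_one]
  have hpi : 1 ≤ 2 ^ 2 * ‖π‖ ^ 2 := by
    rw [Real.norm_of_nonneg Real.pi_pos.le]; nlinarith [Real.pi_gt_three]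
  calc _ = 1 * ((‖ξ 0‖ ^ 2 + ‖ξ 1‖ ^ 2) * ‖𝓕 v ξ‖ ^ 2) := by ring
    _ ≤ (2 ^ 2 * ‖π‖ ^ 2) * ((‖ξ 0‖ ^ 2 + ‖ξ 1‖ ^ 2) * ‖𝓕 v ξ‖ ^ 2) := by gcongr
    _ = _ := by ring

/-- The linear part of `emb`. -/
def embL : E 2 →L[ℝ] E 3 := LinearMap.toContinuousLinearMap
  { toFun := fun x => emb x 0
    map_add' := by intro x y; ext i; fin_cases i <;> simp [emb]
    map_smul' := by intro c x; ext i; fin_cases i <;> simp [emb] }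

lemma emb_eq (x : E 2) (t : ℝ) : emb x t = embL x + emb 0 t := by
  change emb x t = emb x 0 + emb 0 t
  ext i; fin_cases i <;> simp [emb]

lemma emb_norm_sq (x : E 2) (t : ℝ) : ‖emb x t‖ ^ 2 = ‖x‖ ^ 2 + t ^ 2 := by
  simp [EuclideanSpace.norm_sq_eq, Fin.sum_univ_three, emb]

lemma emb_inner (x y : E 2) (t s : ℝ) : inner ℝ (emb x t) (emb y s) = inner ℝ x y + t * s := by
  simp [PiLp.inner_apply, Fin.sum_univ_three, emb, mul_comm]

lemma norm_le_emb (x : E 2) (t : ℝ) : ‖x‖ ≤ ‖emb x t‖ := by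
  have := emb_norm_sq x t
  exact le_of_sq_le_sq (by nlinarith) (norm_nonneg _)

lemma emb_cont : Continuous (fun p : E 2 × ℝ => emb p.1 p.2) := by
  unfold emb
  refine (EuclideanSpace.equiv (Fin 3) ℝ).symm.continuous.comp ?_
  refine continuous_pi fun i => ?_
  fin_cases i <;> simp <;> fun_prop

lemma emb_isClosedEmbedding (t : ℝ) : Topology.IsClosedEmbedding (fun x => emb x t) := by
  refine Isometry.isClosedEmbedding (Isometry.of_dist_eq fun x y => ?_)
  rw [emb_eq x, emb_eq y, dist_add_right, dist_eq_norm, dist_eq_norm, ← map_sub]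
  have := emb_norm_sq (x - y) 0
  change ‖emb (x - y) 0‖ = _
  rw [← sq_eq_sq₀ (norm_nonneg _) (norm_nonneg _), this]; ring

lemma emb_mp : MeasurePreserving (fun p : E 2 × ℝ => emb p.1 p.2) := by
  have h1 := (EuclideanSpace.volume_preserving_symm_measurableEquiv_toLp (Fin 3)).symm
  have h2 := EuclideanSpace.volume_preserving_symm_measurableEquiv_toLp (Fin 2)
  have h3 := (volume_preserving_piFinSuccAbove (fun _ : Fin 3 => ℝ) 2).symm
  have h4 : MeasurePreserving (fun p : E 2 × ℝ =>
      (p.2, (MeasurableEquiv.toLp 2 (Fin 2 → ℝ)).symm p.1)) := by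
    have := (MeasurePreserving.id (volume : Measure ℝ)).prod h2
    exact this.comp Measure.measurePreserving_swap
  have h5 := h1.comp (h3.comp h4)
  convert h5 using 1
  ext p i
  fin_cases i <;> simp [emb, MeasurableEquiv.piFinSuccAbove, Fin.insertNthEquiv] <;> rfl

lemma slice_bound {f : E 3 → ℝ} (hf : Continuous f) (hs : HasCompactSupport f) :
    ∃ C, ∀ t, ∫ x : E 2, f (emb x t) ≤ C := by
  obtain ⟨M, hM⟩ := hs.exists_bound_of_continuous hf
  obtain ⟨R, hR⟩ := hs.isCompact.isBounded.subset_closedBall 0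
  have hM0 : 0 ≤ M := (norm_nonneg _).trans (hM 0)
  refine ⟨∫ x : E 2, (Metric.closedBall (0 : E 2) R).indicator (fun _ => M) x, fun t => ?_⟩
  have hi : ∀ x : E 2, f (emb x t) ≤ (Metric.closedBall (0 : E 2) R).indicator (fun _ => M) x := by
    intro x
    by_cases hx : x ∈ Metric.closedBall (0 : E 2) R
    · rw [Set.indicator_of_mem hx]
      exact (le_abs_self _).trans (hM _)
    · rw [Set.indicator_of_notMem hx]
      have : emb x t ∉ tsupport f := by
        intro h
        have := hR h
        simp only [Metric.mem_closedBall, dist_zero_right] at this hx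
        exact hx ((norm_le_emb x t).trans this)
      rw [image_eq_zero_of_notMem_tsupport this]
  refine integral_mono ?_ ?_ hi
  · have hc : Continuous (fun x : E 2 => f (emb x t)) :=
      hf.comp (emb_isClosedEmbedding t).continuous
    exact hc.integrable_of_hasCompactSupport (hs.comp_isClosedEmbedding (emb_isClosedEmbedding t))
  · rw [integrable_indicator_iff Metric.isClosed_closedBall.measurableSet]
    exact integrableOn_const (measure_closedBall_lt_top.ne) (by simp)

/-- Slice of a smooth compactly supported function, as a Schwartz function. -/
def slice (a : E 3 → ℂ) (ha : ContDiff ℝ (⊤ : ℕ∞) a) (hs : HasCompactSupport a) (t : ℝ) :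
    SchwartzMap (E 2) ℂ :=
  HasCompactSupport.toSchwartzMap (f := fun x => a (emb x t))
    (hs.comp_isClosedEmbedding (emb_isClosedEmbedding t)) (by
      refine ha.comp ?_
      have he : (fun x => emb x t) = fun x => embL x + emb 0 t := funext fun x => emb_eq x t
      rw [he]
      exact embL.contDiff.add contDiff_const)

lemma slice_apply (a : E 3 → ℂ) (ha : ContDiff ℝ (⊤ : ℕ∞) a) (hs : HasCompactSupport a) (t : ℝ) :
    (slice a ha hs t : E 2 → ℂ) = fun x => a (emb x t) := rfl

lemma slice_fderiv (b : E 3 → ℂ) (hb : ContDiff ℝ (⊤ : ℕ∞) b) (t : ℝ) (x : E 2) (i : Fin 2) :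
    fderiv ℝ (fun x => b (emb x t)) x (EuclideanSpace.single i 1) =
      fderiv ℝ b (emb x t) (EuclideanSpace.single i.castSucc 1) := by
  have h1 : HasFDerivAt (fun x => emb x t) embL x := by
    have he : (fun x => emb x t) = fun x => embL x + emb 0 t := funext fun x => emb_eq x t
    rw [he]
    exact embL.hasFDerivAt.add_const _
  have h2 := ((hb.differentiable (by simp)) (emb x t)).hasFDerivAt.comp x h1
  have h3 : fderiv ℝ (fun x => b (emb x t)) x = (fderiv ℝ b (emb x t)).comp embL := h2.fderiv
  rw [h3]
  simp only [ContinuousLinearMap.comp_apply]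
  congr 1
  change emb (EuclideanSpace.single i 1) 0 = _
  ext j; fin_cases i <;> fin_cases j <;> simp [emb]

lemma slice_L2 (a : E 3 → ℂ) (ha : Continuous a) (hs : HasCompactSupport a) :
    ∫⁻ t : ℝ, ∫⁻ ξ : E 2, ENNReal.ofReal ‖ξ‖ * ‖𝓕 (fun x => a (emb x t)) ξ‖ₑ ^ 2 ≤
      ∫⁻ ξ : E 3, ENNReal.ofReal ‖ξ‖ * ‖𝓕 a ξ‖ₑ ^ 2 := by
  have hai : Integrable a := ha.integrable_of_hasCompactSupport hs
  have hhi : Integrable (fun p : E 2 × ℝ => a (emb p.1 p.2)) := emb_mp.integrable_comp_of_integrable hai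
  have hhc : Continuous (fun p : E 2 × ℝ => a (emb p.1 p.2)) := ha.comp emb_cont
  let c : E 2 → ℝ → ℂ := fun ξ t => 𝓕 (fun x => a (emb x t)) ξ
  have hcdef : ∀ ξ t, c ξ t = ∫ x, (𝐞 (-inner ℝ x ξ) : ℂ) * a (emb x t) := by
    intro ξ t
    simp only [c, Real.fourier_eq, Circle.smul_def, smul_eq_mul]
  have hker : ∀ ξ : E 2, Integrable (fun p : E 2 × ℝ => (𝐞 (-inner ℝ p.1 ξ) : ℂ) * a (emb p.1 p.2)) := by
    intro ξ
    refine hhi.bdd_mul (c := 1) (Continuous.aestronglyMeasurable ?_) (Filter.Eventually.of_forall ?_)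
    · exact continuous_subtype_val.comp (Real.continuous_fourierChar.comp (by fun_prop))
    · intro p; exact (Circle.norm_coe _).le
  have hci : ∀ ξ, Integrable (c ξ) := by
    intro ξ
    have := (hker ξ).integral_prod_right
    exact this.congr (Filter.Eventually.of_forall fun t => (hcdef ξ t).symm)
  obtain ⟨C, hC⟩ := slice_bound (f := fun x => ‖a x‖) ha.norm hs.norm
  have hcb : ∀ ξ t, ‖c ξ t‖ ≤ C := by
    intro ξ t
    rw [hcdef]
    refine (norm_integral_le_integral_norm _).trans (le_trans (le_of_eq ?_) (hC t))
    simp only [norm_mul, Circle.norm_coe, one_mul]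
  have hc2 : ∀ ξ, MemLp (c ξ) 2 := fun ξ => memLp_two_of_bdd (hci ξ) (hcb ξ)
  have hFc : ∀ ξ τ, 𝓕 (c ξ) τ = 𝓕 a (emb ξ τ) := by
    intro ξ τ
    rw [Real.fourier_eq, Real.fourier_eq]
    have hFi : Integrable (fun y : E 3 => 𝐞 (-inner ℝ y (emb ξ τ)) • a y) := by
      simpa using hai
    have hFi' : Integrable (fun p : E 2 × ℝ =>
        𝐞 (-inner ℝ (emb p.1 p.2) (emb ξ τ)) • a (emb p.1 p.2)) :=
      emb_mp.integrable_comp_of_integrable hFi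
    have e0 : ∫ y : E 3, 𝐞 (-inner ℝ y (emb ξ τ)) • a y =
        ∫ p : E 2 × ℝ, 𝐞 (-inner ℝ (emb p.1 p.2) (emb ξ τ)) • a (emb p.1 p.2) := by
      conv_lhs => rw [← emb_mp.map_eq]
      rw [integral_map emb_cont.measurable.aemeasurable]
      rw [emb_mp.map_eq]
      exact hFi.1
    rw [e0, Measure.volume_eq_prod, integral_prod_symm _ hFi']
    refine integral_congr_ae (Filter.Eventually.of_forall fun t => ?_)
    simp only [hcdef, Circle.smul_def, smul_eq_mul]
    rw [← integral_const_mul]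
    refine integral_congr_ae (Filter.Eventually.of_forall fun x => ?_)
    simp only
    rw [emb_inner, neg_add, AddChar.map_add_eq_mul, Circle.coe_mul]
    have ht : inner ℝ t τ = t * τ := by simp [mul_comm]
    rw [ht]
    ring
  have hcm : Measurable (fun p : ℝ × E 2 => c p.2 p.1) := by
    have h : StronglyMeasurable (fun p : ℝ × E 2 => ∫ x, (𝐞 (-inner ℝ x p.2) : ℂ) * a (emb x p.1)) := by
      refine StronglyMeasurable.integral_prod_right
        (f := fun (p : ℝ × E 2) (x : E 2) => (𝐞 (-inner ℝ x p.2) : ℂ) * a (emb x p.1)) ?_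
      refine Continuous.stronglyMeasurable ?_
      refine Continuous.mul ?_ (ha.comp (emb_cont.comp (by fun_prop : Continuous fun q : (ℝ × E 2) × E 2 => (q.2, q.1.1))))
      exact continuous_subtype_val.comp (Real.continuous_fourierChar.comp (by fun_prop))
    simp_rw [hcdef]
    exact h.measurable
  change ∫⁻ t : ℝ, ∫⁻ ξ : E 2, ENNReal.ofReal ‖ξ‖ * ‖c ξ t‖ₑ ^ 2 ≤ _
  have hcm2 : Measurable (Function.uncurry
      (fun (t : ℝ) (ξ : E 2) => ENNReal.ofReal ‖ξ‖ * ‖c ξ t‖ₑ ^ 2)) := by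
    refine Measurable.mul ?_ (hcm.enorm.pow_const 2)
    fun_prop
  rw [lintegral_lintegral_swap hcm2.aemeasurable]
  have e1 : ∀ ξ : E 2, ∫⁻ t : ℝ, ENNReal.ofReal ‖ξ‖ * ‖c ξ t‖ₑ ^ 2 =
      ∫⁻ τ : ℝ, ENNReal.ofReal ‖ξ‖ * ‖𝓕 a (emb ξ τ)‖ₑ ^ 2 := by
    intro ξ
    rw [lintegral_const_mul' _ _ (by finiteness), lintegral_const_mul' _ _ (by finiteness),
      ← plancherel (hci ξ) (hc2 ξ)]
    simp_rw [hFc]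
  simp_rw [e1]
  have hFa : Continuous (𝓕 a) :=
    VectorFourier.fourierIntegral_continuous Real.continuous_fourierChar
      (by exact continuous_inner) hai
  have hFm : Measurable (fun ξ : E 3 => ENNReal.ofReal ‖ξ‖ * ‖𝓕 a ξ‖ₑ ^ 2) := by fun_prop
  have hFm' : Measurable (fun p : E 2 × ℝ =>
      ENNReal.ofReal ‖emb p.1 p.2‖ * ‖𝓕 a (emb p.1 p.2)‖ₑ ^ 2) := hFm.comp emb_cont.measurable
  rw [← emb_mp.lintegral_comp hFm, Measure.volume_eq_prod,
    lintegral_prod _ hFm'.aemeasurable]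
  refine lintegral_mono fun ξ => lintegral_mono fun τ => ?_
  simp only
  gcongr
  exact norm_le_emb _ _

lemma ofReal_int_le {α : Type*} [MeasurableSpace α] (μ : Measure α) {f : α → ℝ} (hf : ∀ x, 0 ≤ f x) :
    ENNReal.ofReal (∫ x, f x ∂μ) ≤ ∫⁻ x, ENNReal.ofReal (f x) ∂μ := by
  by_cases h : Integrable f μ
  · rw [ofReal_integral_eq_lintegral_ofReal h (Filter.Eventually.of_forall hf)]
  · rw [integral_undef h]; simp

lemma hNorm_sq (d : ℕ) (f : E d → ℂ) :
    hNorm d (1/2) f ^ 2 = ∫ ξ : E d, ‖ξ‖ * ‖𝓕 f ξ‖ ^ 2 := by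
  unfold hNorm
  have h0 : 0 ≤ ∫ ξ : E d, ‖ξ‖ ^ (2 * (1/2) : ℝ) * ‖𝓕 f ξ‖ ^ 2 :=
    integral_nonneg fun ξ => by positivity
  rw [← Real.sqrt_eq_rpow, Real.sq_sqrt h0]
  norm_num

lemma ofReal_weight (d : ℕ) (f : E d → ℂ) (ξ : E d) :
    ENNReal.ofReal (‖ξ‖ * ‖𝓕 f ξ‖ ^ 2) = ENNReal.ofReal ‖ξ‖ * ‖𝓕 f ξ‖ₑ ^ 2 := by
  rw [ENNReal.ofReal_mul (norm_nonneg _), ENNReal.ofReal_pow (norm_nonneg _), ofReal_norm (𝓕 f ξ)]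

/-- `‖ab‖_{L²_v Ḣ^{1/2}_h} ≤ C ‖a‖_{Ḣ^{1/2}(ℝ³)}
(‖∇_h b‖_{L^∞_v L²_h} + ‖b‖_{L^∞})`. -/
theorem product_slicewise_half :
    ∃ C > (0:ℝ), ∀ a b : E 3 → ℂ,
      ContDiff ℝ (⊤ : ℕ∞) a → HasCompactSupport a → ContDiff ℝ (⊤ : ℕ∞) b → HasCompactSupport b →
      (∫ x₃ : ℝ, (hNorm 2 (1/2) (fun xh : E 2 => a (emb xh x₃) * b (emb xh x₃))) ^ 2) ^ (1/2 : ℝ) ≤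
        C * hNorm 3 (1/2) a *
          ((⨆ x₃ : ℝ, (∫ xh : E 2,
              (‖fderiv ℝ b (emb xh x₃) (EuclideanSpace.single 0 1)‖ ^ 2
               + ‖fderiv ℝ b (emb xh x₃) (EuclideanSpace.single 1 1)‖ ^ 2)) ^ (1/2 : ℝ))
            + ⨆ x : E 3, ‖b x‖) := by
  obtain ⟨κ, hκt, hκ⟩ := product2D
  refine ⟨√κ.toReal + 1, by positivity, fun a b ha has hb hbs => ?_⟩
  set G : ℝ → ℝ := fun x₃ => ∫ xh : E 2,
              (‖fderiv ℝ b (emb xh x₃) (EuclideanSpace.single 0 1)‖ ^ 2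
               + ‖fderiv ℝ b (emb xh x₃) (EuclideanSpace.single 1 1)‖ ^ 2) with hG
  set D := ⨆ x₃ : ℝ, (G x₃) ^ (1/2 : ℝ) with hD
  set M := ⨆ x : E 3, ‖b x‖ with hMdef
  have hG0 : ∀ t, 0 ≤ G t := fun t => integral_nonneg fun x => by positivity
  have hM : ∀ x, ‖b x‖ ≤ M := by
    obtain ⟨C, hC⟩ := hbs.exists_bound_of_continuous hb.continuous
    exact fun x => le_ciSup (f := fun x => ‖b x‖) ⟨C, by rintro _ ⟨y, rfl⟩; exact hC y⟩ x
  have hDt : ∀ t, (G t) ^ (1/2 : ℝ) ≤ D := by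
    have hdc : Continuous (fderiv ℝ b) := hb.continuous_fderiv (by simp)
    obtain ⟨C, hC⟩ := slice_bound (f := fun y => ‖fderiv ℝ b y (EuclideanSpace.single 0 1)‖ ^ 2
        + ‖fderiv ℝ b y (EuclideanSpace.single 1 1)‖ ^ 2) (by fun_prop)
        ((hbs.fderiv ℝ).comp_left (g := fun L : E 3 →L[ℝ] ℂ =>
          ‖L (EuclideanSpace.single 0 1)‖ ^ 2 + ‖L (EuclideanSpace.single 1 1)‖ ^ 2) (by simp))
    refine fun t => le_ciSup (f := fun t => (G t) ^ (1/2 : ℝ)) ⟨C ^ (1/2 : ℝ), ?_⟩ t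
    rintro _ ⟨s, rfl⟩
    exact Real.rpow_le_rpow (hG0 s) (hC s) (by norm_num)
  have hM0 : 0 ≤ M := (norm_nonneg _).trans (hM 0)
  have hD0 : 0 ≤ D := (Real.rpow_nonneg (hG0 0) _).trans (hDt 0)
  have hGD : ∀ t, G t ≤ D ^ 2 := by
    intro t
    have h := hDt t
    rw [← Real.sqrt_eq_rpow] at h
    exact (Real.sqrt_le_left hD0).1 h
  set K := D + M with hK
  have hK0 : 0 ≤ K := by positivity
  -- slice estimate
  have hslice : ∀ t, ENNReal.ofReal (hNorm 2 (1/2) (fun xh : E 2 => a (emb xh t) * b (emb xh t)) ^ 2)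
      ≤ κ * ENNReal.ofReal (K ^ 2) *
        ∫⁻ ξ : E 2, ENNReal.ofReal ‖ξ‖ * ‖𝓕 (fun x => a (emb x t)) ξ‖ₑ ^ 2 := by
    intro t
    rw [hNorm_sq]
    refine (ofReal_int_le _ fun ξ => by positivity).trans ?_
    simp_rw [ofReal_weight]
    refine (hκ (slice a ha has t) (slice b hb hbs t) (ENNReal.ofReal M) fun x => ?_).trans ?_
    · rw [← ofReal_norm]
      exact ENNReal.ofReal_le_ofReal (hM _)
    · refine mul_le_mul' (mul_le_mul' le_rfl ?_) (le_of_eq rfl)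
      refine (add_le_add le_rfl (grad_bound _)).trans ?_
      rw [slice_apply]
      simp_rw [slice_fderiv b hb]
      rw [← ENNReal.ofReal_pow hM0]
      change _ + ENNReal.ofReal (G t) ≤ _
      rw [← ENNReal.ofReal_add (by positivity) (hG0 t)]
      refine ENNReal.ofReal_le_ofReal ?_
      have := hGD t
      nlinarith [mul_nonneg hD0 hM0]
  have hN3 : ENNReal.ofReal (hNorm 3 (1/2) a ^ 2) =
      ∫⁻ ξ : E 3, ENNReal.ofReal ‖ξ‖ * ‖𝓕 a ξ‖ₑ ^ 2 := by
    rw [hNorm_sq, ofReal_integral_eq_lintegral_ofReal]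
    · simp_rw [ofReal_weight]
    · let Z : SchwartzMap (E 3) ℂ := 𝓕 (has.toSchwartzMap ha)
      have hZ : ∀ ξ, 𝓕 a ξ = Z ξ := fun ξ => rfl
      obtain ⟨C, -, hC⟩ := Z.decay 0 0
      simp only [pow_zero, one_mul, norm_iteratedFDeriv_zero] at hC
      simp_rw [hZ]
      have h1 := Z.integrable_pow_mul volume 1
      have hZc := Z.continuous
      have h2 := h1.mul_bdd (c := C) (g := fun ξ => ‖Z ξ‖)
        (Continuous.aestronglyMeasurable (by fun_prop))
        (Filter.Eventually.of_forall (by simpa using hC))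
      refine h2.congr (Filter.Eventually.of_forall fun ξ => ?_)
      simp only; ring
    · exact Filter.Eventually.of_forall fun ξ => by positivity
  have hH0 : 0 ≤ hNorm 3 (1/2) a :=
    Real.rpow_nonneg (integral_nonneg fun ξ => by positivity) _
  set H := hNorm 3 (1/2) a with hH
  set I := ∫ x₃ : ℝ, (hNorm 2 (1/2) (fun xh : E 2 => a (emb xh x₃) * b (emb xh x₃))) ^ 2 with hI
  have hmain : ENNReal.ofReal I ≤ ENNReal.ofReal (κ.toReal * K ^ 2 * H ^ 2) := by
    calc ENNReal.ofReal I ≤ _ := ofReal_int_le _ fun t => by positivity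
      _ ≤ _ := lintegral_mono hslice
      _ = κ * ENNReal.ofReal (K ^ 2) * _ := lintegral_const_mul' _ _ (by finiteness)
      _ ≤ κ * ENNReal.ofReal (K ^ 2) * ENNReal.ofReal (H ^ 2) := by
        rw [hN3]
        exact mul_le_mul' le_rfl (slice_L2 a ha.continuous has)
      _ = _ := by
        rw [ENNReal.ofReal_mul (by positivity), ENNReal.ofReal_mul (by positivity),
          ENNReal.ofReal_toReal hκt]
  have hmain' : I ≤ κ.toReal * K ^ 2 * H ^ 2 :=
    (ENNReal.ofReal_le_ofReal_iff (by positivity)).1 hmain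
  rw [← Real.sqrt_eq_rpow]
  calc √I ≤ √(κ.toReal * K ^ 2 * H ^ 2) := Real.sqrt_le_sqrt hmain'
    _ = √κ.toReal * K * H := by
      rw [Real.sqrt_mul (by positivity), Real.sqrt_mul (by positivity), Real.sqrt_sq hK0,
        Real.sqrt_sq hH0]
    _ ≤ (√κ.toReal + 1) * H * K := by nlinarith [mul_nonneg hK0 hH0]
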